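/- Let (Y,σ_Y) be an infinite topologically mixing shift of finite type over a finite alphabet. Then Y contains a nonempty closed shift-invariant subset X such that the restriction of the shift to X is chaotic almost minimal. -/

import Mathlib

open Set MeasureTheory

instance homeomorphGroup {X : Type*} [TopologicalSpace X] : Group (X ≃ₜ X) where
  mul f g := g.trans f
  one := Homeomorph.refl X
  inv f := f.symm
  mul_assoc f g h := Homeomorph.ext fun _ => rfl
  one_mul f := Homeomorph.ext fun _ => rfl
  mul_one f := Homeomorph.ext fun _ => rfl
  inv_mul_cancel f := Homeomorph.ext fun x => f.symm_apply_apply x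

def shiftHomeo (A : Type*) [TopologicalSpace A] : (ℤ → A) ≃ₜ (ℤ → A) where
  toFun x := fun n => x (n + 1)
  invFun x := fun n => x (n - 1)
  left_inv x := funext fun n => by simp
  right_inv x := funext fun n => by simp
  continuous_toFun := continuous_pi fun n => continuous_apply (n + 1)
  continuous_invFun := continuous_pi fun n => continuous_apply (n - 1)

def restrictHomeo {X : Type*} [TopologicalSpace X] (e : X ≃ₜ X) (s : Set X)
    (h : ∀ x, x ∈ s ↔ e x ∈ s) : s ≃ₜ s where
  toEquiv := e.toEquiv.subtypeEquiv h
  continuous_toFun := by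
    exact Continuous.subtype_mk (e.continuous.comp continuous_subtype_val) _
  continuous_invFun := by
    exact Continuous.subtype_mk (e.symm.continuous.comp continuous_subtype_val) _

def IsCAMZ {X : Type*} [TopologicalSpace X] (T : X ≃ₜ X) : Prop :=
  (∀ n : ℤ, n ≠ 0 → T ^ n ≠ 1) ∧
  (∀ U V : Set X, IsOpen U → IsOpen V → U.Nonempty → V.Nonempty →
      ∃ n : ℤ, ((T ^ n) '' U ∩ V).Nonempty) ∧
  Dense {x : X | ∃ k : ℕ, 0 < k ∧ (T ^ k) x = x} ∧
  ∀ A : Set X, IsClosed A → T '' A = A → A ≠ Set.univ → A.Finite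

def IsCAM {G X : Type*} [Group G] [TopologicalSpace X] (T : G →* (X ≃ₜ X)) : Prop :=
  Function.Injective T ∧
  (∀ U V : Set X, IsOpen U → IsOpen V → U.Nonempty → V.Nonempty →
      ∃ g : G, ((T g) '' U ∩ V).Nonempty) ∧
  Dense {x : X | (Set.range fun g : G => T g x).Finite} ∧
  ∀ A : Set X, IsClosed A → (∀ g : G, T g '' A = A) → A ≠ Set.univ → A.Finite

/-- The word `w` occurs as a block somewhere in the bi-infinite sequence `x`. -/
def occursIn {A : Type*} (w : List A) (x : ℤ → A) : Prop :=
  ∃ k : ℤ, ∀ i : Fin w.length, x (k + (i.val : ℤ)) = w.get i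

/-!
Let `a` and `b` be two loops at a common vertex of the shift of finite type, so that all their
concatenations are allowed in `Y`, and suppose that `b` does not occur in any `|a|`-periodic
sequence. They exist by transitivity, and because `Y` is infinite and hence does not consist of
`|a|`-periodic points.

Put `q₀ = b`, `P₀ = {a}`, and inductively `Pₙ₊₁ = Pₙ ∪ {qₙ}` and `qₙ₊₁ = (∏_{p ∈ Pₙ} qₙ pⁿ⁺¹) qₙ`.
Let `X` be the set of sequences each finite window of which occurs in some `qₙ`.

* Growing powers of each `p ∈ Pₙ` occur in later `q_N`, so `p^∞ ∈ X`. In particular `qₙ^∞ ∈ X`. As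
  `qₙ` occurs in every later `q_N`, these points yield transitivity and dense periodic points.
* For `n ≤ N`, the word `q_N` is a concatenation of blocks `qₙ pᵐ` with `p ∈ Pₙ`. A stretch of it
  without `qₙ` is therefore, away from its ends, part of a power of a single `p`. Hence the points
  of `X` in which `qₙ` does not occur have the common period `∏_{p ∈ Pₙ} |p|`, and by compactness
  there are finitely many of them. So an infinite closed invariant subset of `X` contains, for every
  `n`, a point in which `qₙ` occurs, and is all of `X`.
* If a power `σᵈ`, `d > 0`, were the identity on `X`, then `a^∞` would be isolated in `X` and hence
  lie on the orbit of some `qₙ^∞`, in which `b` occurs.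
-/

/-! ### Homeomorphisms restricted to invariant sets -/

section Homeomorph

variable {X : Type*} [TopologicalSpace X]

lemma zpow_apply_mem_iff {e : X ≃ₜ X} {s : Set X} (h : ∀ x, x ∈ s ↔ e x ∈ s) (n : ℤ) (x : X) :
    (e ^ n) x ∈ s ↔ x ∈ s := by
  induction n generalizing x with
  | zero => rfl
  | succ n ih => rw [zpow_add_one, h x]; exact ih (e x)
  | pred n ih =>
    rw [zpow_sub_one]
    refine (ih (e.symm x)).trans ?_
    rw [h, e.apply_symm_apply]

lemma coe_restrictHomeo_zpow (e : X ≃ₜ X) (s : Set X) (h : ∀ x, x ∈ s ↔ e x ∈ s) (n : ℤ) (x : s) :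
    ((restrictHomeo e s h ^ n) x : X) = (e ^ n) x := by
  induction n generalizing x with
  | zero => rfl
  | succ n ih => rw [zpow_add_one, zpow_add_one]; exact ih (restrictHomeo e s h x)
  | pred n ih => rw [zpow_sub_one, zpow_sub_one]; exact ih ((restrictHomeo e s h).symm x)

/-- Topological transitivity in forward time. Allowing negative times would be strictly weaker: the
orbit closure of `⋯000111⋯` is an infinite shift of finite type which is transitive in that sense
and has only two periodic points. -/
def IsForwardTransitive (T : X ≃ₜ X) : Prop :=
  ∀ U V : Set X, IsOpen U → IsOpen V → U.Nonempty → V.Nonempty →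
    ∃ n : ℕ, ((T ^ n) '' U ∩ V).Nonempty

lemma IsForwardTransitive.exists_ge_zpow_mem {e : X ≃ₜ X} {s : Set X} {h : ∀ x, x ∈ s ↔ e x ∈ s}
    (he : IsForwardTransitive (restrictHomeo e s h)) {U V : Set X} (hU : IsOpen U) (hV : IsOpen V)
    (hsU : (s ∩ U).Nonempty) (hsV : (s ∩ V).Nonempty) (B : ℕ) :
    ∃ n : ℕ, B ≤ n ∧ ∃ x ∈ s, x ∈ U ∧ (e ^ (n : ℤ)) x ∈ V := by
  obtain ⟨x, hxs, hxU⟩ := hsU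
  obtain ⟨y, hys, hyV⟩ := hsV
  -- Transitivity applied to `T ^ B '' U` and `V` yields a time of at least `B`.
  obtain ⟨n, _, ⟨_, ⟨z, hzU, rfl⟩, rfl⟩, hzV⟩ := he
    ((restrictHomeo e s h ^ B) '' (Subtype.val ⁻¹' U)) (Subtype.val ⁻¹' V)
    ((restrictHomeo e s h ^ B).isOpenMap _ (hU.preimage continuous_subtype_val))
    (hV.preimage continuous_subtype_val) ⟨_, ⟨x, hxs⟩, hxU, rfl⟩ ⟨⟨y, hys⟩, hyV⟩
  refine ⟨n + B, Nat.le_add_left B n, z, z.2, hzU, ?_⟩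
  rw [← coe_restrictHomeo_zpow e s h, zpow_natCast, pow_add]
  exact hzV

end Homeomorph

/-! ### Words and windows -/

section Words

variable {A : Type*}

lemma shiftHomeo_zpow_apply [TopologicalSpace A] (n : ℤ) (x : ℤ → A) (i : ℤ) :
    (shiftHomeo A ^ n) x i = x (i + n) := by
  induction n generalizing x i with
  | zero => rw [add_zero]; rfl
  | succ n ih =>
    rw [zpow_add_one, add_comm (n : ℤ), ← add_assoc, add_right_comm]
    exact ih (shiftHomeo A x) i
  | pred n ih =>
    rw [zpow_sub_one, ← add_sub_assoc]
    exact ih ((shiftHomeo A).symm x) i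

lemma infix_append_of_infix_append_overlap {f s v w : List A} (hf : f.length ≤ v.length)
    (h : f <:+: s ++ v ++ w) : f <:+: s ++ v ∨ f <:+: v ++ w := by
  obtain h | h | ⟨f₁, f₂, rfl, hf₁, hf₂⟩ := List.infix_append_iff.1 h
  · exact .inl h
  · exact .inr (h.trans (List.suffix_append v w).isInfix)
  · have hf₁v : f₁ <:+ v := List.suffix_of_suffix_length_le hf₁ (List.suffix_append s v)
      (by simp only [List.length_append] at hf; omega)
    obtain ⟨r, rfl⟩ := hf₁v
    obtain ⟨t, rfl⟩ := hf₂
    exact .inr ⟨r, t, by simp⟩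

lemma infix_of_append_append_infix {s v t q r q' : List A} (hs : q.length ≤ s.length)
    (ht : q'.length ≤ t.length) (h : s ++ v ++ t <:+: q ++ r ++ q') : v <:+: r := by
  obtain ⟨c, d, h⟩ := h
  obtain ⟨e, he⟩ : q <+: c ++ s := List.prefix_of_prefix_length_le (l₃ := q ++ r ++ q')
    ⟨r ++ q', by simp⟩ ⟨v ++ t ++ d, by simp [← h]⟩ (by simp; omega)
  obtain ⟨f, hf⟩ : q' <:+ t ++ d := List.suffix_of_suffix_length_le (l₃ := q ++ r ++ q')
    ⟨q ++ r, rfl⟩ ⟨c ++ s ++ v, by simp [← h]⟩ (by simp; omega)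
  have hr : q ++ (e ++ v ++ f) ++ q' = q ++ r ++ q' := by
    rw [← h]
    calc q ++ (e ++ v ++ f) ++ q' = (q ++ e) ++ v ++ (f ++ q') := by simp
      _ = c ++ (s ++ v ++ t) ++ d := by rw [he, hf]; simp
  exact ⟨e, f, List.append_cancel_left (List.append_cancel_right hr)⟩

/-- The word of length `l` read off the sequence `x` from the coordinate `k` on. -/
def window (x : ℤ → A) (k : ℤ) (l : ℕ) : List A :=
  List.ofFn fun i : Fin l => x (k + (i : ℤ))

@[simp]
lemma length_window (x : ℤ → A) (k : ℤ) (l : ℕ) : (window x k l).length = l :=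
  List.length_ofFn

lemma window_eq_window_iff {x y : ℤ → A} {k k' : ℤ} {l : ℕ} :
    window x k l = window y k' l ↔ ∀ i : ℕ, i < l → x (k + i) = y (k' + i) := by
  rw [window, window, List.ofFn_inj, funext_iff, Fin.forall_iff]

lemma window_add (x : ℤ → A) (k : ℤ) (l m : ℕ) :
    window x k (l + m) = window x k l ++ window x (k + l) m := by
  simp only [window, List.ofFn_add, Fin.val_castLE, Fin.val_natAdd, Nat.cast_add, add_assoc]

lemma window_shiftHomeo_zpow [TopologicalSpace A] (n : ℤ) (x : ℤ → A) (k : ℤ) (l : ℕ) :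
    window ((shiftHomeo A ^ n) x) k l = window x (k + n) l :=
  window_eq_window_iff.2 fun i _ => by rw [shiftHomeo_zpow_apply, add_right_comm]

lemma window_infix_window (x : ℤ → A) (k : ℤ) {j m l : ℕ} (h : j + m ≤ l) :
    window x (k + j) m <:+: window x k l := by
  obtain ⟨r, rfl⟩ := Nat.exists_eq_add_of_le h
  rw [window_add, window_add]
  exact List.infix_append _ _ _

lemma exists_window_eq_of_infix {u : List A} {x : ℤ → A} {k : ℤ} {l : ℕ}
    (h : u <:+: window x k l) : ∃ j, window x j u.length = u := by
  obtain ⟨s, t, h⟩ := h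
  obtain rfl : s.length + u.length + t.length = l := by
    simpa [add_assoc] using congrArg List.length h
  rw [window_add, window_add] at h
  have h := (List.append_inj h (by simp)).1
  exact ⟨k + s.length, (List.append_inj h (by simp)).2.symm⟩

lemma occursIn_iff_exists_window_eq {w : List A} {x : ℤ → A} :
    occursIn w x ↔ ∃ k, window x k w.length = w := by
  refine exists_congr fun k => ?_
  rw [← funext_iff, ← List.ofFn_inj, List.ofFn_get]
  rfl

lemma occursIn_of_infix_window {u : List A} {x : ℤ → A} {k : ℤ} {l : ℕ}
    (h : u <:+: window x k l) : occursIn u x :=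
  occursIn_iff_exists_window_eq.2 (exists_window_eq_of_infix h)

lemma occursIn_of_infix {u w : List A} {x : ℤ → A} (h : u <:+: w) (hw : occursIn w x) :
    occursIn u x := by
  obtain ⟨k, hk⟩ := occursIn_iff_exists_window_eq.1 hw
  exact occursIn_of_infix_window (hk ▸ h)

lemma isLocallyConstant_window [TopologicalSpace A] [DiscreteTopology A] (k : ℤ) (l : ℕ) :
    IsLocallyConstant fun x : ℤ → A => window x k l :=
  have h : IsLocallyConstant fun (x : ℤ → A) (i : Fin l) => x (k + (i : ℤ)) :=
    (IsLocallyConstant.iff_continuous _).2 (continuous_pi fun _ => continuous_apply _)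
  h.comp List.ofFn

lemma exists_forall_window_eq_imp_mem [TopologicalSpace A] {U : Set (ℤ → A)} (hU : IsOpen U)
    {x : ℤ → A} (hx : x ∈ U) :
    ∃ (k : ℤ) (l : ℕ), ∀ y : ℤ → A, window y k l = window x k l → y ∈ U := by
  obtain ⟨I, u, hu, hIU⟩ := isOpen_pi_iff.1 hU x hx
  set L := I.sup Int.natAbs
  refine ⟨-L, 2 * L + 1, fun y hy => hIU fun i hi => ?_⟩
  have hiL : i.natAbs ≤ L := Finset.le_sup (f := Int.natAbs) hi
  have hyx := window_eq_window_iff.1 hy (i + L).toNat (by omega)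
  rw [show -(L : ℤ) + (i + L).toNat = i by omega] at hyx
  exact hyx ▸ (hu i hi).2

/-! ### Periodic sequences -/

lemma window_add_period {x : ℤ → A} {d : ℤ} (hx : Function.Periodic x d) (k : ℤ) (l : ℕ) :
    window x (k + d) l = window x k l :=
  window_eq_window_iff.2 fun i _ => by rw [add_right_comm, hx]

lemma window_emod_period {x : ℤ → A} {d : ℤ} (hx : Function.Periodic x d) (k : ℤ) (l : ℕ) :
    window x (k % d) l = window x k l := by
  rw [← window_add_period (hx.zsmul (k / d)), smul_eq_mul, mul_comm, Int.emod_add_mul_ediv]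

lemma eq_of_periodic_of_window_eq {x y : ℤ → A} {d : ℕ} (hd : 0 < d) (hx : Function.Periodic x d)
    (hy : Function.Periodic y d) (h : window x 0 d = window y 0 d) : x = y := by
  funext k
  have hk : window x k 1 = window y k 1 := by
    rw [← window_emod_period hx, ← window_emod_period hy, window_eq_window_iff]
    intro i hi
    have h₁ := Int.emod_nonneg k (b := (d : ℤ)) (by omega)
    have h₂ := Int.emod_lt_of_pos k (b := (d : ℤ)) (by omega)
    have := window_eq_window_iff.1 h ((k % d).toNat + i) (by omega)
    rwa [show (0 : ℤ) + ((k % d).toNat + i : ℕ) = k % d + i by omega] at this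
  simpa using window_eq_window_iff.1 hk 0 one_pos

lemma finite_of_isCompact_of_forall_periodic [TopologicalSpace A] [DiscreteTopology A]
    {K : Set (ℤ → A)} (hK : IsCompact K) {d : ℕ} (hd : 0 < d)
    (h : ∀ x ∈ K, Function.Periodic x d) : K.Finite := by
  refine hK.finite ⟨discreteTopology_subtype_iff'.2 fun x hx => ?_⟩
  refine ⟨_, (isLocallyConstant_window 0 d).isOpen_fiber (window x 0 d), ?_⟩
  ext y
  refine ⟨fun hy => eq_of_periodic_of_window_eq hd (h y hy.2) (h x hx) hy.1, ?_⟩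
  rintro rfl
  exact ⟨rfl, hx⟩

/-- The `m`-th power of the word `p` under concatenation. -/
def wordPow (p : List A) (m : ℕ) : List A := (List.replicate m p).flatten

/-- The sequence `p^∞` obtained by repeating the nonempty word `p`, with a copy of `p` starting at
the coordinate `0`. -/
def periodicSeq (p : List A) (hp : p ≠ []) (k : ℤ) : A :=
  p[(k % (p.length : ℤ)).toNat]'(by
    have h := List.length_pos_iff.2 hp
    have := Int.emod_nonneg k (b := (p.length : ℤ)) (by omega)
    have := Int.emod_lt_of_pos k (b := (p.length : ℤ)) (by omega)
    omega)

variable {p : List A}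

lemma periodic_periodicSeq (hp : p ≠ []) : Function.Periodic (periodicSeq p hp) p.length :=
  fun k => by simp only [periodicSeq, Int.add_emod_right]

lemma window_periodicSeq_length (hp : p ≠ []) : window (periodicSeq p hp) 0 p.length = p := by
  refine List.ext_getElem (length_window _ _ _) fun i _ hi => ?_
  have hmod : ((i : ℤ) % (p.length : ℤ)).toNat = i := by
    rw [Int.emod_eq_of_lt (by omega) (by omega), Int.toNat_natCast]
  simp only [window, List.getElem_ofFn, periodicSeq, zero_add, hmod]

lemma window_periodicSeq_mul_length (hp : p ≠ []) (m : ℕ) :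
    window (periodicSeq p hp) 0 (m * p.length) = wordPow p m := by
  induction m with
  | zero => simp [window, wordPow]
  | succ m ih =>
    rw [Nat.succ_mul, add_comm, window_add, window_add_period (periodic_periodicSeq hp), ih,
      window_periodicSeq_length]
    rfl

lemma occursIn_periodicSeq (hp : p ≠ []) : occursIn p (periodicSeq p hp) :=
  occursIn_iff_exists_window_eq.2 ⟨0, window_periodicSeq_length hp⟩

lemma window_periodicSeq_infix_wordPow (hp : p ≠ []) (k : ℤ) {l m : ℕ} (h : l < m) :
    window (periodicSeq p hp) k l <:+: wordPow p m := by
  have hpos := List.length_pos_iff.2 hp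
  have h₁ := Int.emod_nonneg k (b := (p.length : ℤ)) (by omega)
  have h₂ := Int.emod_lt_of_pos k (b := (p.length : ℤ)) (by omega)
  rw [← window_emod_period (periodic_periodicSeq hp), ← window_periodicSeq_mul_length hp,
    show k % (p.length : ℤ) = 0 + ((k % (p.length : ℤ)).toNat : ℕ) by omega]
  refine window_infix_window _ _ ?_
  calc (k % (p.length : ℤ)).toNat + l ≤ p.length + l * p.length :=
        Nat.add_le_add (by omega) (Nat.le_mul_of_pos_right l hpos)
    _ = (l + 1) * p.length := by ring
    _ ≤ m * p.length := Nat.mul_le_mul_right _ h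

lemma apply_add_eq_of_window_infix_wordPow {d m : ℕ} (hd : p.length ∣ d) {x : ℤ → A} {t : ℤ}
    (h : window x t (d + 1) <:+: wordPow p m) : x (t + d) = x t := by
  have hp : p ≠ [] := by
    rintro rfl
    simpa [wordPow] using h.length_le
  rw [← window_periodicSeq_mul_length hp] at h
  obtain ⟨j, hj⟩ := exists_window_eq_of_infix h
  rw [length_window, window_eq_window_iff] at hj
  obtain ⟨c, rfl⟩ := hd
  have hper : Function.Periodic (periodicSeq p hp) ((p.length * c : ℕ) : ℤ) := by
    rw [Nat.cast_mul, mul_comm]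
    exact (periodic_periodicSeq hp).int_mul c
  rw [← hj _ (Nat.lt_succ_self _), hper, ← add_zero j, ← add_zero t]
  exact hj 0 (Nat.succ_pos _)

/-! ### Concatenations of blocks -/

open Computability

lemma flatten_mem_kstar {l : Language A} {L : List (List A)} (h : ∀ w ∈ L, w ∈ l∗) :
    L.flatten ∈ l∗ :=
  kstar_idem l ▸ Language.join_mem_kstar h

lemma append_mem_kstar {l : Language A} {u v : List A} (hu : u ∈ l∗) (hv : v ∈ l∗) :
    u ++ v ∈ l∗ := by
  simpa using flatten_mem_kstar (L := [u, v]) (by simp [hu, hv])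

lemma wordPow_mem_kstar {l : Language A} {w : List A} (hw : w ∈ l∗) (m : ℕ) :
    wordPow w m ∈ l∗ :=
  flatten_mem_kstar fun _ h => List.eq_of_mem_replicate h ▸ hw

/-- The language of blocks `q pᵐ` with `p ∈ P`. -/
def blocks (P : List (List A)) (q : List A) : Language A :=
  {w | ∃ p ∈ P, ∃ m, w = q ++ wordPow p m}

variable {P : List (List A)} {q : List A}

lemma append_wordPow_mem_kstar_blocks (hp : p ∈ P) (m : ℕ) :
    q ++ wordPow p m ∈ (blocks P q)∗ :=
  le_kstar (a := blocks P q) ⟨p, hp, m, rfl⟩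

lemma self_mem_kstar_blocks (hp : p ∈ P) : q ∈ (blocks P q)∗ := by
  simpa [wordPow] using append_wordPow_mem_kstar_blocks hp 0

lemma eq_nil_or_prefix_of_mem_kstar_blocks {w : List A} (hw : w ∈ (blocks P q)∗) :
    w = [] ∨ q <+: w := by
  obtain ⟨_ | ⟨u, L⟩, rfl, hL⟩ := Language.mem_kstar.1 hw
  · exact .inl rfl
  · obtain ⟨p, -, m, rfl⟩ := hL u (by simp)
    exact .inr ⟨wordPow p m ++ L.flatten, by simp⟩

lemma exists_infix_block_of_mem_kstar_blocks {u w : List A} (hw : w ∈ (blocks P q)∗)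
    (hu : u ≠ []) (huw : u <:+: w) (hq : ¬ q <:+: u) :
    ∃ p ∈ P, ∃ m, u <:+: q ++ wordPow p m ++ q := by
  obtain ⟨L, rfl, hL⟩ := Language.mem_kstar.1 hw
  clear hw
  induction L with
  | nil => exact absurd (List.infix_nil.1 huw) hu
  | cons v L ih =>
    rw [List.forall_mem_cons] at hL
    obtain ⟨⟨p, hp, m, rfl⟩, hL⟩ := hL
    obtain h | h | ⟨u₁, u₂, rfl, hu₁, hu₂⟩ := List.infix_append_iff.1 huw
    · exact ⟨p, hp, m, h.trans (List.prefix_append _ _).isInfix⟩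
    · exact ih hL h
    · have hu₂q : u₂ <+: q := by
        obtain hnil | hpre := eq_nil_or_prefix_of_mem_kstar_blocks (Language.join_mem_kstar hL)
        · exact (List.prefix_nil.1 (hnil ▸ hu₂)) ▸ List.nil_prefix
        · refine (List.prefix_or_prefix_of_prefix hu₂ hpre).resolve_right fun h => hq ?_
          exact h.isInfix.trans (List.suffix_append u₁ u₂).isInfix
      exact ⟨p, hp, m, List.infix_append_iff.2 (.inr (.inr ⟨u₁, u₂, rfl, hu₁, hu₂q⟩))⟩

/-! ### Subshifts generated by a language -/

/-- The subshift of all sequences each finite window of which is an infix of a word of `Q`. -/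
def generatedShift (Q : Language A) : Set (ℤ → A) :=
  {x | ∀ (k : ℤ) (l : ℕ), ∃ q ∈ Q, window x k l <:+: q}

lemma generatedShift_mono_of_infix {Q R : Language A} (h : ∀ q ∈ Q, ∃ r ∈ R, q <:+: r) :
    generatedShift Q ⊆ generatedShift R := by
  intro x hx k l
  obtain ⟨q, hq, hxq⟩ := hx k l
  obtain ⟨r, hr, hqr⟩ := h q hq
  exact ⟨r, hr, hxq.trans hqr⟩

lemma not_occursIn_of_mem_generatedShift {Q : Language A} {f : List A}
    (h : ∀ q ∈ Q, ¬ f <:+: q) {x : ℤ → A} (hx : x ∈ generatedShift Q) : ¬ occursIn f x := by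
  intro hf
  obtain ⟨k, hk⟩ := occursIn_iff_exists_window_eq.1 hf
  obtain ⟨q, hq, hxq⟩ := hx k f.length
  exact h q hq (hk ▸ hxq)

/-- A window long enough to contain a copy of `q` on either side of `[t, t + d]` lies in a block
`q pᵐ q`, so that `[t, t + d]` falls into `pᵐ`. -/
lemma periodic_of_not_occursIn {d : ℕ} (hd : ∀ p ∈ P, p.length ∣ d) {x : ℤ → A}
    (hx : x ∈ generatedShift (blocks P q)∗) (hq : ¬ occursIn q x) : Function.Periodic x d := by
  intro t
  obtain ⟨w, hw, hxw⟩ := hx (t - q.length) (q.length + (d + 1) + q.length)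
  obtain ⟨p, hp, m, h⟩ := exists_infix_block_of_mem_kstar_blocks hw
    (List.ne_nil_of_length_pos (by rw [length_window]; omega)) hxw
    fun h => hq (occursIn_of_infix_window h)
  rw [window_add, window_add, sub_add_cancel] at h
  exact apply_add_eq_of_window_infix_wordPow (hd p hp)
    (infix_of_append_append_infix (length_window _ _ _).ge (length_window _ _ _).ge h)

section Topology

variable [TopologicalSpace A] {Q : Language A}

lemma mem_generatedShift_iff_shiftHomeo_mem (x : ℤ → A) :
    x ∈ generatedShift Q ↔ shiftHomeo A x ∈ generatedShift Q := by
  have hwindow : ∀ k l, window (shiftHomeo A x) k l = window x (k + 1) l := fun k l => by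
    simpa using window_shiftHomeo_zpow 1 x k l
  simp only [generatedShift, mem_ofPred_eq, hwindow]
  exact ⟨fun h k => h (k + 1), fun h k => by simpa using h (k - 1)⟩

lemma exists_forall_occursIn_imp_zpow_mem {U : Set (ℤ → A)} (hU : IsOpen U)
    (hQU : (generatedShift Q ∩ U).Nonempty) :
    ∃ q ∈ Q, ∀ y, occursIn q y → ∃ s : ℤ, (shiftHomeo A ^ s) y ∈ U := by
  obtain ⟨x, hx, hxU⟩ := hQU
  obtain ⟨k, l, hkl⟩ := exists_forall_window_eq_imp_mem hU hxU
  obtain ⟨q, hq, hxq⟩ := hx k l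
  refine ⟨q, hq, fun y hy => ?_⟩
  obtain ⟨s, hs⟩ := occursIn_iff_exists_window_eq.1 (occursIn_of_infix hxq hy)
  rw [length_window] at hs
  refine ⟨s - k, hkl _ ?_⟩
  rw [window_shiftHomeo_zpow, add_sub_cancel, hs]

variable [DiscreteTopology A]

lemma isClosed_generatedShift : IsClosed (generatedShift Q) := by
  simp only [generatedShift, ofPred_forall]
  exact isClosed_iInter fun k => isClosed_iInter fun l =>
    isOpen_compl_iff.1 (isLocallyConstant_window k l {w | ∃ q ∈ Q, w <:+: q}ᶜ)

lemma isCompact_generatedShift {S : Set A} (hS : S.Finite) (h : ∀ q ∈ Q, ∀ c ∈ q, c ∈ S) :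
    IsCompact (generatedShift Q) := by
  refine (isCompact_univ_pi fun _ => hS.isCompact).of_isClosed_subset isClosed_generatedShift ?_
  intro x hx i _
  obtain ⟨q, hq, hxq⟩ := hx i 1
  exact h q hq (x i) (hxq.subset (by simp [window]))

end Topology

end Words

/-! ### The chaotic almost minimal subshift of two words -/

section CAMShift

variable {A : Type*}

mutual

/-- The words `Pₙ` of stage `n` of the construction, the repetitions of which are points of the
subshift. -/
def repeatedWords (a b : List A) : ℕ → List (List A)
  | 0 => [a]
  | n + 1 => connector a b n :: repeatedWords a b n

/-- The connecting word `qₙ` of stage `n` of the construction. -/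
def connector (a b : List A) : ℕ → List A
  | 0 => b
  | n + 1 => ((repeatedWords a b n).map fun p => connector a b n ++ wordPow p (n + 1)).flatten ++
      connector a b n

end

/-- The subshift of all sequences each finite window of which occurs in a connecting word. -/
def camShift (a b : List A) : Set (ℤ → A) :=
  generatedShift {w | ∃ n, w = connector a b n}

section Combinatorics

variable (a b : List A)

lemma repeatedWords_mono {n N : ℕ} (h : n ≤ N) : repeatedWords a b n ⊆ repeatedWords a b N := by
  induction h with
  | refl => exact List.Subset.refl _
  | step _ ih => exact fun p hp => List.mem_cons_of_mem _ (ih hp)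

lemma left_mem_repeatedWords (n : ℕ) : a ∈ repeatedWords a b n :=
  repeatedWords_mono a b n.zero_le (by simp [repeatedWords])

lemma connector_infix_connector {n N : ℕ} (h : n ≤ N) : connector a b n <:+: connector a b N := by
  induction h with
  | refl => exact List.infix_rfl
  | step _ ih => exact ih.trans (List.suffix_append _ _).isInfix

lemma wordPow_infix_connector_succ {n : ℕ} {p : List A} (hp : p ∈ repeatedWords a b n) :
    wordPow p (n + 1) <:+: connector a b (n + 1) := by
  rw [connector]
  calc wordPow p (n + 1)
      <:+: connector a b n ++ wordPow p (n + 1) := (List.suffix_append _ _).isInfix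
    _ <:+: ((repeatedWords a b n).map fun p => connector a b n ++ wordPow p (n + 1)).flatten :=
        List.infix_of_mem_flatten (List.mem_map_of_mem hp)
    _ <:+: _ := (List.prefix_append _ _).isInfix

open Computability

lemma kstar_blocks_succ_le (n : ℕ) :
    (blocks (repeatedWords a b (n + 1)) (connector a b (n + 1)))∗ ≤
      (blocks (repeatedWords a b n) (connector a b n))∗ := by
  rw [← kstar_idem (blocks (repeatedWords a b n) _)]
  refine kstar_mono ?_
  rintro _ ⟨p, hp, m, rfl⟩
  have hq := self_mem_kstar_blocks (q := connector a b n) (left_mem_repeatedWords a b n)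
  have hprod : ((repeatedWords a b n).map fun p => connector a b n ++ wordPow p (n + 1)).flatten ∈
      (blocks (repeatedWords a b n) (connector a b n))∗ :=
    flatten_mem_kstar <| List.forall_mem_map.2 fun p hp => append_wordPow_mem_kstar_blocks hp _
  rw [connector, List.append_assoc]
  refine append_mem_kstar hprod ?_
  obtain rfl | hp := List.mem_cons.1 hp
  · exact append_mem_kstar hq (wordPow_mem_kstar hq m)
  · exact append_wordPow_mem_kstar_blocks hp m

lemma connector_mem_kstar_blocks {n N : ℕ} (h : n ≤ N) :
    connector a b N ∈ (blocks (repeatedWords a b n) (connector a b n))∗ :=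
  antitone_nat_of_succ_le (f := fun n => (blocks (repeatedWords a b n) (connector a b n))∗)
    (kstar_blocks_succ_le a b) h
    (self_mem_kstar_blocks (left_mem_repeatedWords a b N))

lemma camShift_subset_generatedShift_kstar_blocks (n : ℕ) :
    camShift a b ⊆ generatedShift (blocks (repeatedWords a b n) (connector a b n))∗ := by
  refine generatedShift_mono_of_infix ?_
  rintro _ ⟨N, rfl⟩
  exact ⟨connector a b (max n N), connector_mem_kstar_blocks a b (le_max_left n N),
    connector_infix_connector a b (le_max_right n N)⟩

lemma connector_mem_kstar_pair (n : ℕ) : connector a b n ∈ ({a, b} : Language A)∗ := by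
  have hle : blocks [a] b ≤ ({a, b} : Language A)∗ := by
    rintro _ ⟨p, hp, m, rfl⟩
    have ha : a ∈ ({a, b} : Language A)∗ := le_kstar (a := ({a, b} : Language A)) (.inl rfl)
    have hb : b ∈ ({a, b} : Language A)∗ := le_kstar (a := ({a, b} : Language A)) (.inr rfl)
    exact append_mem_kstar hb (wordPow_mem_kstar (List.mem_singleton.1 hp ▸ ha) m)
  exact (kstar_idem ({a, b} : Language A) ▸ kstar_mono hle)
    (connector_mem_kstar_blocks a b n.zero_le)

variable {a b}

lemma connector_ne_nil (hb : b ≠ []) : ∀ n, connector a b n ≠ []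
  | 0 => hb
  | n + 1 => List.append_ne_nil_of_right_ne_nil _ (connector_ne_nil hb n)

lemma ne_nil_of_mem_repeatedWords (ha : a ≠ []) (hb : b ≠ []) {n : ℕ} {p : List A}
    (hp : p ∈ repeatedWords a b n) : p ≠ [] := by
  induction n with
  | zero => exact List.mem_singleton.1 hp ▸ ha
  | succ n ih =>
    obtain rfl | hp := List.mem_cons.1 hp
    · exact connector_ne_nil hb n
    · exact ih hp

lemma periodicSeq_mem_camShift {n : ℕ} {p : List A} (hp : p ∈ repeatedWords a b n) (h : p ≠ []) :
    periodicSeq p h ∈ camShift a b := fun k l =>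
  ⟨_, ⟨n + l + 1, rfl⟩, (window_periodicSeq_infix_wordPow h k (by omega)).trans
    (wordPow_infix_connector_succ a b (repeatedWords_mono a b (Nat.le_add_right n l) hp))⟩

lemma periodicSeq_connector_mem_camShift {n : ℕ} (h : connector a b n ≠ []) :
    periodicSeq (connector a b n) h ∈ camShift a b :=
  periodicSeq_mem_camShift (n := n + 1) List.mem_cons_self h

lemma exists_period_of_not_occursIn_connector (ha : a ≠ []) (hb : b ≠ []) (n : ℕ) :
    ∃ d : ℕ, 0 < d ∧
      ∀ x ∈ camShift a b, ¬ occursIn (connector a b n) x → Function.Periodic x d := by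
  refine ⟨((repeatedWords a b n).map List.length).prod, List.prod_pos ?_, fun x hx hq => ?_⟩
  · exact List.forall_mem_map.2 fun p hp =>
      List.length_pos_iff.2 (ne_nil_of_mem_repeatedWords ha hb hp)
  · exact periodic_of_not_occursIn (fun p hp => List.dvd_prod (List.mem_map_of_mem hp))
      (camShift_subset_generatedShift_kstar_blocks a b n hx) hq

end Combinatorics

variable [TopologicalSpace A] {a b : List A}

lemma mem_camShift_iff_shiftHomeo_mem (x : ℤ → A) :
    x ∈ camShift a b ↔ shiftHomeo A x ∈ camShift a b :=
  mem_generatedShift_iff_shiftHomeo_mem x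

/-- The restriction of the shift to `camShift a b`. -/
abbrev camShiftHomeo (a b : List A) : camShift a b ≃ₜ camShift a b :=
  restrictHomeo (shiftHomeo A) (camShift a b) mem_camShift_iff_shiftHomeo_mem

lemma coe_camShiftHomeo_zpow (n : ℤ) (x : camShift a b) :
    ((camShiftHomeo a b ^ n) x : ℤ → A) = (shiftHomeo A ^ n) x :=
  coe_restrictHomeo_zpow _ _ _ n x

lemma exists_forall_ge_occursIn_connector_imp_zpow_mem {U : Set (camShift a b)} (hU : IsOpen U)
    (hUne : U.Nonempty) :
    ∃ n, ∀ N, n ≤ N → ∀ y : camShift a b, occursIn (connector a b N) y →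
      ∃ s : ℤ, (camShiftHomeo a b ^ s) y ∈ U := by
  obtain ⟨U', hU', rfl⟩ := isOpen_induced_iff.1 hU
  obtain ⟨x, hx⟩ := hUne
  have hne : (camShift a b ∩ U').Nonempty := ⟨x.1, x.2, hx⟩
  obtain ⟨_, ⟨n, rfl⟩, h⟩ := exists_forall_occursIn_imp_zpow_mem hU' hne
  refine ⟨n, fun N hN y hy => ?_⟩
  simpa only [mem_preimage, coe_camShiftHomeo_zpow] using
    h y (occursIn_of_infix (connector_infix_connector a b hN) hy)

lemma camShiftHomeo_transitive (hb : b ≠ []) {U V : Set (camShift a b)} (hU : IsOpen U)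
    (hV : IsOpen V) (hUne : U.Nonempty) (hVne : V.Nonempty) :
    ∃ n : ℤ, ((camShiftHomeo a b ^ n) '' U ∩ V).Nonempty := by
  obtain ⟨n, hn⟩ := exists_forall_ge_occursIn_connector_imp_zpow_mem hU hUne
  obtain ⟨m, hm⟩ := exists_forall_ge_occursIn_connector_imp_zpow_mem hV hVne
  have hq := connector_ne_nil (a := a) hb (max n m)
  let z : camShift a b := ⟨_, periodicSeq_connector_mem_camShift hq⟩
  obtain ⟨s, hs⟩ := hn _ (le_max_left n m) z (occursIn_periodicSeq hq)
  obtain ⟨r, hr⟩ := hm _ (le_max_right n m) z (occursIn_periodicSeq hq)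
  refine ⟨r - s, (camShiftHomeo a b ^ r) z, ⟨_, hs, ?_⟩, hr⟩
  change (camShiftHomeo a b ^ (r - s) * camShiftHomeo a b ^ s) z = _
  rw [← zpow_add, sub_add_cancel]

lemma dense_periodic_camShiftHomeo (hb : b ≠ []) :
    Dense {x : camShift a b | ∃ k : ℕ, 0 < k ∧ (camShiftHomeo a b ^ k) x = x} := by
  refine dense_iff_inter_open.2 fun U hU hUne => ?_
  obtain ⟨n, hn⟩ := exists_forall_ge_occursIn_connector_imp_zpow_mem hU hUne
  have hq := connector_ne_nil (a := a) hb n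
  let z : camShift a b := ⟨_, periodicSeq_connector_mem_camShift hq⟩
  obtain ⟨s, hs⟩ := hn n le_rfl z (occursIn_periodicSeq hq)
  refine ⟨_, hs, (connector a b n).length, List.length_pos_iff.2 hq, ?_⟩
  refine Subtype.ext (funext fun i => ?_)
  rw [← zpow_natCast, coe_camShiftHomeo_zpow, shiftHomeo_zpow_apply, coe_camShiftHomeo_zpow,
    shiftHomeo_zpow_apply, shiftHomeo_zpow_apply, add_right_comm]
  exact periodic_periodicSeq hq (i + s)

variable [DiscreteTopology A]

lemma isCompact_camShift : IsCompact (camShift a b) := by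
  refine isCompact_generatedShift (S := {c | c ∈ a ++ b}) (List.finite_toSet _) ?_
  rintro _ ⟨n, rfl⟩ c hc
  obtain ⟨L, hL, hLab⟩ := Language.mem_kstar.1 (connector_mem_kstar_pair a b n)
  obtain ⟨w, hw, hcw⟩ := List.mem_flatten.1 (hL ▸ hc)
  obtain rfl | rfl := hLab w hw
  · exact List.mem_append_left _ hcw
  · exact List.mem_append_right _ hcw

lemma camShiftHomeo_zpow_ne_one (ha : a ≠ [])
    (hab : ∀ x : ℤ → A, Function.Periodic x a.length → ¬ occursIn b x) (hb : b ≠ []) {n : ℤ}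
    (hn : n ≠ 0) : camShiftHomeo a b ^ n ≠ 1 := by
  intro hone
  rw [← pow_natAbs_eq_one, ← zpow_natCast] at hone
  have hper : ∀ x : camShift a b, Function.Periodic x.1 n.natAbs := fun x i => by
    rw [← shiftHomeo_zpow_apply (n.natAbs : ℤ) x.1 i, ← coe_camShiftHomeo_zpow, hone]
    rfl
  let α : camShift a b := ⟨_, periodicSeq_mem_camShift (left_mem_repeatedWords a b 0) ha⟩
  -- By periodicity, `α = a^∞` is the only point of this open set.
  have hU : IsOpen {x : camShift a b | window x.1 0 n.natAbs = window α.1 0 n.natAbs} :=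
    ((isLocallyConstant_window 0 n.natAbs).isOpen_fiber _).preimage continuous_subtype_val
  obtain ⟨m, hm⟩ := exists_forall_ge_occursIn_connector_imp_zpow_mem hU ⟨α, rfl⟩
  have hq := connector_ne_nil (a := a) hb m
  let z : camShift a b := ⟨_, periodicSeq_connector_mem_camShift hq⟩
  obtain ⟨s, hs⟩ := hm m le_rfl z (occursIn_periodicSeq hq)
  have hzα : (shiftHomeo A ^ s) z.1 = α.1 := by
    rw [← coe_camShiftHomeo_zpow]
    exact eq_of_periodic_of_window_eq (Int.natAbs_pos.2 hn) (hper _) (hper α) hs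
  have hza : Function.Periodic z.1 a.length := fun i => by
    have hα := periodic_periodicSeq ha (i - s)
    change α.1 _ = α.1 _ at hα
    rw [← hzα, shiftHomeo_zpow_apply, shiftHomeo_zpow_apply, add_right_comm, sub_add_cancel] at hα
    exact hα
  exact hab z.1 hza
    (occursIn_of_infix (connector_infix_connector a b m.zero_le) (occursIn_periodicSeq hq))

lemma finite_of_isClosed_of_camShiftHomeo_image_eq (ha : a ≠ []) (hb : b ≠ [])
    {C : Set (camShift a b)} (hC : IsClosed C) (hCinv : camShiftHomeo a b '' C = C)
    (hne : C ≠ univ) : C.Finite := by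
  obtain ⟨n, hn⟩ :=
    exists_forall_ge_occursIn_connector_imp_zpow_mem hC.isOpen_compl (nonempty_compl.2 hne)
  obtain ⟨d, hd, hper⟩ := exists_period_of_not_occursIn_connector ha hb n
  have hCmem : ∀ x, x ∈ C ↔ camShiftHomeo a b x ∈ C := fun x => by
    conv_rhs => rw [← hCinv, (camShiftHomeo a b).injective.mem_set_image]
  have hCq : ∀ x ∈ C, ¬ occursIn (connector a b n) x := by
    intro x hx hq
    obtain ⟨s, hs⟩ := hn n le_rfl x hq
    exact hs ((zpow_apply_mem_iff hCmem s x).2 hx)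
  have hCcompact : IsCompact (Subtype.val '' C) :=
    have := isCompact_iff_compactSpace.1 (isCompact_camShift (a := a) (b := b))
    hC.isCompact.image continuous_subtype_val
  refine Set.Finite.of_finite_image ?_ Subtype.val_injective.injOn
  exact finite_of_isCompact_of_forall_periodic hCcompact hd <|
    forall_mem_image.2 fun x hx => hper x x.2 (hCq x hx)

theorem isCAMZ_camShiftHomeo (ha : a ≠ [])
    (hab : ∀ x : ℤ → A, Function.Periodic x a.length → ¬ occursIn b x) :
    IsCAMZ (camShiftHomeo a b) := by
  have hb : b ≠ [] := by
    rintro rfl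
    exact hab _ (periodic_periodicSeq ha)
      (occursIn_of_infix List.nil_infix (occursIn_periodicSeq ha))
  exact ⟨fun _ => camShiftHomeo_zpow_ne_one ha hab hb,
    fun _ _ => camShiftHomeo_transitive hb,
    dense_periodic_camShiftHomeo hb,
    fun _ => finite_of_isClosed_of_camShiftHomeo_image_eq ha hb⟩

end CAMShift

/-! ### Loops in a transitive shift of finite type -/

section Loops

variable {A : Type*} {F : Set (List A)} {v : List A}

/-- `w` labels a loop at the vertex `v` of the shift of finite type with forbidden words `F`, whose
vertices are words of the length of `v`: the word `v ++ w` is free of forbidden words and leads back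
to `v`. -/
def IsLoop (F : Set (List A)) (v w : List A) : Prop :=
  v <:+ v ++ w ∧ ∀ f ∈ F, ¬ f <:+: v ++ w

lemma IsLoop.nil {w : List A} (h : IsLoop F v w) : IsLoop F v [] := by
  rw [IsLoop, List.append_nil]
  exact ⟨List.suffix_rfl, fun f hf hfv => h.2 f hf (hfv.trans (List.prefix_append v w).isInfix)⟩

lemma IsLoop.append (hF : ∀ f ∈ F, f.length ≤ v.length) {w w' : List A} (h : IsLoop F v w)
    (h' : IsLoop F v w') : IsLoop F v (w ++ w') := by
  obtain ⟨⟨s, hs⟩, hwF⟩ := h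
  have hconcat : v ++ (w ++ w') = s ++ v ++ w' := by rw [hs, List.append_assoc]
  rw [IsLoop, hconcat]
  refine ⟨?_, fun f hf hfi => ?_⟩
  · rw [List.append_assoc]
    exact h'.1.trans (List.suffix_append s _)
  · obtain h | h := infix_append_of_infix_append_overlap (hF f hf) hfi
    · exact hwF f hf (hs ▸ h)
    · exact h'.2 f hf h

open Computability in
lemma isLoop_of_mem_kstar (hF : ∀ f ∈ F, f.length ≤ v.length) (hnil : IsLoop F v [])
    {l : Language A} (hl : ∀ w ∈ l, IsLoop F v w) {w : List A} (hw : w ∈ l∗) : IsLoop F v w := by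
  obtain ⟨L, rfl, hL⟩ := Language.mem_kstar.1 hw
  clear hw
  induction L with
  | nil => exact hnil
  | cons u L ih =>
    rw [List.forall_mem_cons] at hL
    exact (hl u hL.1).append hF (ih hL.2)

lemma isLoop_window {y : ℤ → A} (hy : ∀ f ∈ F, ¬ occursIn f y) {M n : ℕ}
    (h : window y n M = window y 0 M) : IsLoop F (window y 0 M) (window y M n) := by
  have hconcat : window y 0 M ++ window y M n = window y 0 (M + n) := by
    rw [window_add, zero_add]
  rw [IsLoop, hconcat]
  refine ⟨⟨window y 0 n, ?_⟩, fun f hf hfi => hy f hf (occursIn_of_infix_window hfi)⟩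
  rw [add_comm, window_add, zero_add, h]

lemma not_occursIn_of_mem_camShift (hF : ∀ f ∈ F, f.length ≤ v.length) {a b : List A}
    (ha : IsLoop F v a) (hb : IsLoop F v b) {f : List A} (hf : f ∈ F) {x : ℤ → A}
    (hx : x ∈ camShift a b) : ¬ occursIn f x := by
  refine not_occursIn_of_mem_generatedShift ?_ hx
  rintro _ ⟨n, rfl⟩ hfn
  have hloop : IsLoop F v (connector a b n) :=
    isLoop_of_mem_kstar hF ha.nil (by rintro w (rfl | rfl) <;> assumption)
      (connector_mem_kstar_pair a b n)
  exact hloop.2 f hf (hfn.trans (List.suffix_append v _).isInfix)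

variable [TopologicalSpace A] [DiscreteTopology A] {Y : Set (ℤ → A)}
  {hYinv : ∀ x, x ∈ Y ↔ shiftHomeo A x ∈ Y}

/-- If all points had period `n`, every orbit would be finite and open in `Y`, so that by
transitivity there would be only one. -/
lemma exists_not_periodic (hYinf : Y.Infinite)
    (htrans : IsForwardTransitive (restrictHomeo (shiftHomeo A) Y hYinv)) {n : ℕ} (hn : 0 < n) :
    ∃ y ∈ Y, ¬ Function.Periodic y n := by
  by_contra! hper
  obtain ⟨y, hy⟩ := hYinf.nonempty
  have hcylinder (x : ℤ → A) := (isLocallyConstant_window 0 n).isOpen_fiber (window x 0 n)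
  refine hYinf (((Set.finite_Ico (0 : ℤ) n).image fun k => (shiftHomeo A ^ k) y).subset ?_)
  intro x hx
  obtain ⟨m, -, z, hz, hzy, hzx⟩ := htrans.exists_ge_zpow_mem (hcylinder y) (hcylinder x)
    ⟨y, hy, rfl⟩ ⟨x, hx, rfl⟩ 0
  obtain rfl : z = y := eq_of_periodic_of_window_eq hn (hper z hz) (hper y hy) hzy
  have hmx : (shiftHomeo A ^ (m : ℤ)) z = x := eq_of_periodic_of_window_eq hn
    (hper _ ((zpow_apply_mem_iff hYinv m z).2 hz)) (hper x hx) hzx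
  refine ⟨m % n, ⟨Int.emod_nonneg _ (by omega), Int.emod_lt_of_pos _ (by omega)⟩, ?_⟩
  rw [← hmx]
  refine eq_of_periodic_of_window_eq hn (hper _ ((zpow_apply_mem_iff hYinv _ z).2 hz))
    (hper _ ((zpow_apply_mem_iff hYinv _ z).2 hz)) ?_
  simp only [window_shiftHomeo_zpow, zero_add, window_emod_period (hper z hz)]

lemma exists_isLoop_ne_nil (hYF : ∀ y ∈ Y, ∀ f ∈ F, ¬ occursIn f y)
    (htrans : IsForwardTransitive (restrictHomeo (shiftHomeo A) Y hYinv)) {y : ℤ → A} (hy : y ∈ Y)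
    (M : ℕ) : ∃ a, a ≠ [] ∧ IsLoop F (window y 0 M) a := by
  have hcylinder := (isLocallyConstant_window 0 M).isOpen_fiber (window y 0 M)
  obtain ⟨n, hn, x, hx, hxy, hnx⟩ :=
    htrans.exists_ge_zpow_mem hcylinder hcylinder ⟨y, hy, rfl⟩ ⟨y, hy, rfl⟩ 1
  rw [mem_ofPred_eq] at hxy
  rw [mem_ofPred_eq, window_shiftHomeo_zpow, zero_add, ← hxy] at hnx
  refine ⟨window x M n, List.ne_nil_of_length_pos (by rwa [length_window]), ?_⟩
  exact hxy ▸ isLoop_window (hYF x hx) hnx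

/-- The loop passes through letters `c ≠ c'` that are `n` places apart. -/
lemma exists_isLoop_not_occursIn_of_periodic (hYF : ∀ y ∈ Y, ∀ f ∈ F, ¬ occursIn f y)
    (hYinf : Y.Infinite)
    (htrans : IsForwardTransitive (restrictHomeo (shiftHomeo A) Y hYinv)) {y : ℤ → A} (hy : y ∈ Y)
    (M : ℕ) {n : ℕ} (hn : 0 < n) :
    ∃ b, IsLoop F (window y 0 M) b ∧ ∀ z : ℤ → A, Function.Periodic z n → ¬ occursIn b z := by
  obtain ⟨u, hu, hun⟩ := exists_not_periodic hYinf htrans hn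
  obtain ⟨k, hk⟩ := not_forall.1 hun
  set C := {x : ℤ → A | window x 0 M = window y 0 M}
  have hC : IsOpen C := (isLocallyConstant_window 0 M).isOpen_fiber _
  set V := {x : ℤ → A | x n ≠ x 0}
  have hV : IsOpen V := isOpen_ne_fun (continuous_apply _) (continuous_apply _)
  have hVne : (Y ∩ V).Nonempty := by
    refine ⟨(shiftHomeo A ^ k) u, (zpow_apply_mem_iff hYinv k u).2 hu, ?_⟩
    simpa only [V, mem_ofPred_eq, shiftHomeo_zpow_apply, zero_add, add_comm _ k, add_zero] using hk
  obtain ⟨m, hm, x₁, hx₁, hx₁C, hx₁V⟩ :=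
    htrans.exists_ge_zpow_mem hC hV ⟨y, hy, rfl⟩ hVne M
  obtain ⟨r, hr, x, hx, ⟨hxC, hxV⟩, hrx⟩ := htrans.exists_ge_zpow_mem
    (hC.inter (hV.preimage (shiftHomeo A ^ (m : ℤ)).continuous)) hC
    ⟨x₁, hx₁, hx₁C, hx₁V⟩ ⟨y, hy, rfl⟩ (m + n + 1)
  simp only [C, V, mem_ofPred_eq, mem_preimage, shiftHomeo_zpow_apply, window_shiftHomeo_zpow,
    zero_add] at hxC hxV hrx
  refine ⟨window x M r, hxC ▸ isLoop_window (hYF x hx) (hrx.trans hxC.symm), ?_⟩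
  refine fun z hz hocc => hxV ?_
  obtain ⟨j, hj⟩ := occursIn_iff_exists_window_eq.1 hocc
  rw [length_window, window_eq_window_iff] at hj
  have hj₀ := hj (m - M) (by omega)
  have hj₁ := hj (m - M + n) (by omega)
  rw [Nat.cast_add, ← add_assoc, hz] at hj₁
  convert hj₁.symm.trans hj₀ using 2 <;> omega

end Loops

theorem statement8_general {A : Type*} [TopologicalSpace A] [DiscreteTopology A]
    (F : Set (List A)) (M : ℕ) (hF : ∀ f ∈ F, f.length ≤ M)
    (Y : Set (ℤ → A)) (hYdef : Y = {x | ∀ w ∈ F, ¬ occursIn w x}) (hYinf : Y.Infinite)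
    (hYinv : ∀ x, x ∈ Y ↔ shiftHomeo A x ∈ Y)
    (htrans : IsForwardTransitive (restrictHomeo (shiftHomeo A) Y hYinv)) :
    ∃ (X : Set (ℤ → A)) (hXinv : ∀ x, x ∈ X ↔ shiftHomeo A x ∈ X),
      X ⊆ Y ∧ X.Nonempty ∧ IsCompact X ∧
      IsCAMZ (restrictHomeo (shiftHomeo A) X hXinv) := by
  have hYF : ∀ y ∈ Y, ∀ f ∈ F, ¬ occursIn f y := fun y hy => by rwa [hYdef] at hy
  obtain ⟨y, hy⟩ := hYinf.nonempty
  obtain ⟨a, ha, hloop_a⟩ := exists_isLoop_ne_nil hYF htrans hy M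
  obtain ⟨b, hloop_b, hab⟩ := exists_isLoop_not_occursIn_of_periodic hYF hYinf htrans hy M
    (List.length_pos_iff.2 ha)
  have hFv : ∀ f ∈ F, f.length ≤ (window y 0 M).length := by simpa only [length_window] using hF
  refine ⟨camShift a b, mem_camShift_iff_shiftHomeo_mem, fun x hx => ?_,
    ⟨_, periodicSeq_mem_camShift (left_mem_repeatedWords a b 0) ha⟩, isCompact_camShift,
    isCAMZ_camShiftHomeo ha hab⟩
  rw [hYdef]
  exact fun f hf => not_occursIn_of_mem_camShift hFv hloop_a hloop_b hf hx

/-- Every infinite topologically mixing shift of finite type contains a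
chaotic almost minimal subshift. -/
theorem statement8 {A : Type*} [Fintype A] [TopologicalSpace A] [DiscreteTopology A]
    (F : Set (List A)) (hF : F.Finite)
    (Y : Set (ℤ → A)) (hYdef : Y = {x | ∀ w ∈ F, ¬ occursIn w x})
    (hYne : Y.Nonempty) (hYinf : Y.Infinite)
    (hYinv : ∀ x, x ∈ Y ↔ shiftHomeo A x ∈ Y)
    (hmix : ∀ U V : Set Y, IsOpen U → IsOpen V → U.Nonempty → V.Nonempty →
      ∃ N : ℕ, ∀ n : ℕ, N ≤ n →
        (((restrictHomeo (shiftHomeo A) Y hYinv) ^ n) '' U ∩ V).Nonempty) :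
    ∃ (X : Set (ℤ → A)) (hXinv : ∀ x, x ∈ X ↔ shiftHomeo A x ∈ X),
      X ⊆ Y ∧ X.Nonempty ∧ IsClosed X ∧
      IsCAMZ (restrictHomeo (shiftHomeo A) X hXinv) := by
  obtain ⟨M, hM⟩ := (hF.image List.length).bddAbove
  obtain ⟨X, hXinv, hXY, hXne, hX, hCAM⟩ := statement8_general F M (forall_mem_image.1 hM) Y hYdef
    hYinf hYinv fun U V hU hV hUne hVne => (hmix U V hU hV hUne hVne).imp fun N hN => hN N le_rfl
  exact ⟨X, hXinv, hXY, hXne, hX.isClosed, hCAM⟩
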